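/- Let p ∈ (1, ∞), let F : 𝕋 → ℂ be absolutely continuous with Ḟ ∈ L^p(𝕋), and let f = P[F] be its Poisson integral. Then the function z = re^{iθ} ↦ r f_r(z) (the radial derivative multiplied by r) belongs to the harmonic Hardy space h^p(𝔻). -/

import Mathlib

/-!
Differentiating the Poisson integral and integrating by parts in the angle shows that `r f_r` is the
conjugate Poisson integral of `Ḟ`, so the claim is M. Riesz's theorem that conjugate Poisson
integrals are bounded on `L^p`, uniformly in the radius.

For `1 < p ≤ 2` and a nonnegative density, the Herglotz integral `G` is an analytic function with
values in the right half-plane, where `|w|^p ≤ A (Re w)^p - B Re (w^p)` with `A, B ≥ 0`. Averaged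
over a circle, the last term is nonpositive: by the mean value property it is `-B (G 0)^p`, and
`G 0 > 0`. Hence `G` is controlled by its real part, the Poisson integral of the density, which is
contractive on `L^p`. For `p > 2` one passes to the conjugate exponent, since the conjugate Poisson
kernel is antisymmetric in its two angles.
-/

open MeasureTheory Complex Metric Set Filter
open scoped Real Topology ENNReal

noncomputable section

/-- The Poisson kernel `P(z) = (1-|z|^2)/|1-z|^2`. -/
def poissonKer (z : ℂ) : ℝ := (1 - ‖z‖ ^ 2) / ‖1 - z‖ ^ 2

/-- The Poisson integral of a boundary function `F` defined on the unit circle. -/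
def poissonInt (F : ℂ → ℂ) (z : ℂ) : ℂ :=
  (1 / (2 * π)) * ∫ t in (0:ℝ)..(2 * π),
    (poissonKer (z * Complex.exp (-(t : ℂ) * Complex.I)) : ℂ) *
      F (Complex.exp ((t : ℂ) * Complex.I))

/-- The Poisson integral of a (2π-periodic) function of the angular variable. -/
def poissonIntR (φ : ℝ → ℂ) (z : ℂ) : ℂ :=
  (1 / (2 * π)) * ∫ t in (0:ℝ)..(2 * π),
    (poissonKer (z * Complex.exp (-(t : ℂ) * Complex.I)) : ℂ) * φ t

/-- The conjugate Poisson kernel `P̃(z) = Im((1+z)/(1-z))`. -/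
def conjPoissonKer (z : ℂ) : ℝ := ((1 + z) / (1 - z)).im

/-- The conjugate Poisson integral of a function of the angular variable. -/
def conjPoissonIntR (φ : ℝ → ℂ) (z : ℂ) : ℂ :=
  (1 / (2 * π)) * ∫ t in (0:ℝ)..(2 * π),
    (conjPoissonKer (z * Complex.exp (-(t : ℂ) * Complex.I)) : ℂ) * φ t

/-- Wirtinger derivative `f_z = (1/2)(∂ₓ - i ∂_y) f`. -/
def wdz (f : ℂ → ℂ) (z : ℂ) : ℂ :=
  (1 / 2) * (fderiv ℝ f z 1 - Complex.I * fderiv ℝ f z Complex.I)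

/-- Wirtinger derivative `f_z̄ = (1/2)(∂ₓ + i ∂_y) f`. -/
def wdzb (f : ℂ → ℂ) (z : ℂ) : ℂ :=
  (1 / 2) * (fderiv ℝ f z 1 + Complex.I * fderiv ℝ f z Complex.I)

/-- The angular derivative `f_θ(z) = i (z f_z(z) - z̄ f_z̄(z))`. -/
def fTheta (f : ℂ → ℂ) (z : ℂ) : ℂ :=
  Complex.I * (z * wdz f z - (starRingEnd ℂ) z * wdzb f z)

/-- The radial derivative multiplied by `r`: `r f_r(z) = z f_z(z) + z̄ f_z̄(z)`. -/
def rFr (f : ℂ → ℂ) (z : ℂ) : ℂ :=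
  z * wdz f z + (starRingEnd ℂ) z * wdzb f z

/-- `F : 𝕋 → ℂ` is absolutely continuous with angular derivative `Ḟ = Fd`,
i.e. `t ↦ F(e^{it})` is an indefinite integral of the (locally integrable,
2π-periodic) function `Fd`. -/
def IsACDeriv (F : ℂ → ℂ) (Fd : ℝ → ℂ) : Prop :=
  (∀ a b : ℝ, IntervalIntegrable Fd MeasureTheory.volume a b) ∧
  Function.Periodic Fd (2 * π) ∧
  ∀ t : ℝ, F (Complex.exp ((t : ℂ) * Complex.I)) = F 1 + ∫ s in (0:ℝ)..t, Fd s

/-- membership in `L^p(𝕋)`, identifying `𝕋` with `[0, 2π)`. -/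
def MemLpT (p : ℝ≥0∞) (φ : ℝ → ℂ) : Prop :=
  MeasureTheory.MemLp φ p (MeasureTheory.volume.restrict (Ioc (0:ℝ) (2 * π)))

/-- The integral mean `M_p(r, g)`. -/
def Mp (p : ℝ) (g : ℂ → ℂ) (r : ℝ) : ℝ :=
  ((1 / (2 * π)) * ∫ θ in (0:ℝ)..(2 * π),
      ‖g ((r : ℂ) * Complex.exp ((θ : ℂ) * Complex.I))‖ ^ p) ^ (1 / p)

/-- The `L^p(𝕋)` norm `((1/2π) ∫ |φ|^p)^{1/p}`. -/
def lpNormT (p : ℝ) (φ : ℝ → ℂ) : ℝ :=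
  ((1 / (2 * π)) * ∫ t in (0:ℝ)..(2 * π), ‖φ t‖ ^ p) ^ (1 / p)

/-- Membership in the analytic Hardy space `H^p(𝔻)` for `p ∈ [1, ∞)`. -/
def MemHp (p : ℝ) (g : ℂ → ℂ) : Prop :=
  DifferentiableOn ℂ g (ball (0:ℂ) 1) ∧ ∃ M : ℝ, ∀ r ∈ Ioo (0:ℝ) 1, Mp p g r ≤ M

/-- Membership in `H^∞(𝔻)`: bounded analytic functions on the unit disk. -/
def MemHinf (g : ℂ → ℂ) : Prop :=
  DifferentiableOn ℂ g (ball (0:ℂ) 1) ∧ ∃ M : ℝ, ∀ z ∈ ball (0:ℂ) 1, ‖g z‖ ≤ M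

/-- Harmonicity on the unit disk: `f` is C² with vanishing Laplacian. -/
def HarmonicOnD (f : ℂ → ℂ) : Prop :=
  ContDiffOn ℝ 2 f (ball (0:ℂ) 1) ∧
  ∀ z ∈ ball (0:ℂ) 1,
    fderiv ℝ (fun w => fderiv ℝ f w 1) z 1
      + fderiv ℝ (fun w => fderiv ℝ f w Complex.I) z Complex.I = 0

/-- Membership in the harmonic Hardy space `h^p(𝔻)` for `p ∈ [1, ∞)`. -/
def Memhp (p : ℝ) (g : ℂ → ℂ) : Prop :=
  HarmonicOnD g ∧ ∃ M : ℝ, ∀ r ∈ Ioo (0:ℝ) 1, Mp p g r ≤ M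

/-- Membership in `h^∞(𝔻)`: bounded harmonic functions on the unit disk. -/
def Memhinf (g : ℂ → ℂ) : Prop :=
  HarmonicOnD g ∧ ∃ M : ℝ, ∀ z ∈ ball (0:ℂ) 1, ‖g z‖ ≤ M

/-- `L` is the value of the principal-value Hilbert transform
`(1/2π) p.v. ∫ φ(t)/tan((θ-t)/2) dt` of (the 2π-periodic) `φ` at `θ`. -/
def IsPVHilbert (φ : ℝ → ℂ) (θ : ℝ) (L : ℂ) : Prop :=
  Filter.Tendsto
    (fun ε : ℝ => (1 / (2 * π)) *
      ∫ t in Ioo (θ - π) (θ + π) \ Ioo (θ - ε) (θ + ε),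
        φ t / (Real.tan ((θ - t) / 2) : ℂ))
    (nhdsWithin 0 (Ioi 0)) (nhds L)

open Real (circleAverage)
open scoped ComplexConjugate NNReal

section Lp

variable {α β 𝕜 : Type*} [MeasurableSpace α] [MeasurableSpace β] [RCLike 𝕜]
  {μ : Measure α} {ν : Measure β} {p q : ℝ}

lemma rpow_lintegral_mul_le_lintegral_mul_rpow (hp : 1 < p) {w f : α → ℝ≥0∞}
    (hw : AEMeasurable w μ) (hw_one : ∫⁻ x, w x ∂μ ≤ 1) (hf : AEMeasurable f μ) :
    (∫⁻ x, w x * f x ∂μ) ^ p ≤ ∫⁻ x, w x * f x ^ p ∂μ := by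
  have hpq := Real.HolderConjugate.conjExponent hp
  set q := p.conjExponent
  have hp0 : 0 < p := hpq.pos
  rw [← ENNReal.le_rpow_inv_iff hp0]
  calc ∫⁻ x, w x * f x ∂μ
      = ∫⁻ x, (fun x => w x ^ q⁻¹) x * (fun x => w x ^ p⁻¹ * f x) x ∂μ := by
        refine lintegral_congr fun x => ?_
        rw [← mul_assoc, ← ENNReal.rpow_add_of_nonneg _ _ hpq.symm.inv_nonneg hpq.inv_nonneg,
          hpq.symm.inv_add_inv_eq_one, ENNReal.rpow_one]
    _ ≤ (∫⁻ x, (w x ^ q⁻¹) ^ q ∂μ) ^ (1 / q) * (∫⁻ x, (w x ^ p⁻¹ * f x) ^ p ∂μ) ^ (1 / p) :=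
        ENNReal.lintegral_mul_le_Lp_mul_Lq μ hpq.symm (hw.pow_const _) ((hw.pow_const _).mul hf)
    _ = (∫⁻ x, w x ∂μ) ^ (1 / q) * (∫⁻ x, w x * f x ^ p ∂μ) ^ p⁻¹ := by
        simp only [ENNReal.mul_rpow_of_nonneg _ _ hp0.le, ENNReal.rpow_inv_rpow hp0.ne',
          ENNReal.rpow_inv_rpow hpq.symm.ne_zero, one_div]
    _ ≤ (∫⁻ x, w x * f x ^ p ∂μ) ^ p⁻¹ :=
        mul_le_of_le_one_left' (ENNReal.rpow_le_one hw_one hpq.symm.one_div_nonneg)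

lemma eLpNorm_ofReal_eq_lintegral_rpow_enorm {E : Type*} [NormedAddCommGroup E] (hp : 0 < p)
    (f : α → E) : eLpNorm f (ENNReal.ofReal p) μ = (∫⁻ x, ‖f x‖ₑ ^ p ∂μ) ^ p⁻¹ := by
  rw [eLpNorm_eq_lintegral_rpow_enorm_toReal (by simpa) ENNReal.ofReal_ne_top,
    ENNReal.toReal_ofReal hp.le, one_div]

lemma eLpNorm_integral_mul_le_of_lintegral_enorm_le_one [SFinite μ] [SFinite ν] (hp : 1 < p)
    {k : α → β → 𝕜} (hk : Measurable (Function.uncurry k)) (hk_left : ∀ x, ∫⁻ y, ‖k x y‖ₑ ∂ν ≤ 1)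
    (hk_right : ∀ y, ∫⁻ x, ‖k x y‖ₑ ∂μ ≤ 1) {f : β → 𝕜} (hf : AEStronglyMeasurable f ν) :
    eLpNorm (fun x => ∫ y, k x y * f y ∂ν) (ENNReal.ofReal p) μ
      ≤ eLpNorm f (ENNReal.ofReal p) ν := by
  have hp0 : 0 < p := by linarith
  rw [eLpNorm_ofReal_eq_lintegral_rpow_enorm hp0, eLpNorm_ofReal_eq_lintegral_rpow_enorm hp0]
  refine ENNReal.rpow_le_rpow ?_ (by positivity)
  calc ∫⁻ x, ‖∫ y, k x y * f y ∂ν‖ₑ ^ p ∂μ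
      ≤ ∫⁻ x, ∫⁻ y, ‖k x y‖ₑ * ‖f y‖ₑ ^ p ∂ν ∂μ := by
        refine lintegral_mono fun x => le_trans ?_ (rpow_lintegral_mul_le_lintegral_mul_rpow hp
          hk.of_uncurry_left.enorm.aemeasurable (hk_left x) hf.enorm)
        gcongr
        simpa only [enorm_mul] using enorm_integral_le_lintegral_enorm (μ := ν)
          fun y => k x y * f y
    _ = ∫⁻ y, ∫⁻ x, ‖k x y‖ₑ * ‖f y‖ₑ ^ p ∂μ ∂ν :=
        lintegral_lintegral_swap (hk.enorm.aemeasurable.mul (hf.enorm.pow_const p).comp_snd)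
    _ = ∫⁻ y, (∫⁻ x, ‖k x y‖ₑ ∂μ) * ‖f y‖ₑ ^ p ∂ν :=
        lintegral_congr fun y => lintegral_mul_const _ hk.of_uncurry_right.enorm
    _ ≤ ∫⁻ y, ‖f y‖ₑ ^ p ∂ν :=
        lintegral_mono fun y => mul_le_of_le_one_left' (hk_right y)

lemma enorm_integral_mul_le_eLpNorm_mul_eLpNorm (hpq : p.HolderConjugate q) {f g : α → 𝕜}
    (hf : AEStronglyMeasurable f μ) (hg : AEStronglyMeasurable g μ) :
    ‖∫ x, f x * g x ∂μ‖ₑ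
      ≤ eLpNorm f (ENNReal.ofReal p) μ * eLpNorm g (ENNReal.ofReal q) μ := by
  rw [eLpNorm_ofReal_eq_lintegral_rpow_enorm hpq.pos,
    eLpNorm_ofReal_eq_lintegral_rpow_enorm hpq.symm.pos]
  refine (enorm_integral_le_lintegral_enorm _).trans ?_
  simpa only [enorm_mul, one_div, Pi.mul_apply] using
    ENNReal.lintegral_mul_le_Lp_mul_Lq μ hpq hf.enorm hg.enorm

lemma exists_mul_eq_norm_rpow (hpq : p.HolderConjugate q) {v : α → 𝕜}
    (hv : AEStronglyMeasurable v μ) :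
    ∃ g : α → 𝕜, AEStronglyMeasurable g μ ∧ (∀ x, g x * v x = ((‖v x‖ ^ p : ℝ) : 𝕜)) ∧
      ∀ x, ‖g x‖ₑ ^ q = ‖v x‖ₑ ^ p := by
  refine ⟨fun x => (starRingEnd 𝕜) (v x) * ((‖v x‖ ^ (p - 2) : ℝ) : 𝕜), ?_, fun x => ?_,
    fun x => ?_⟩
  · exact (RCLike.continuous_conj.comp_aestronglyMeasurable hv).mul
      (RCLike.continuous_ofReal.comp_aestronglyMeasurable
        (hv.norm.aemeasurable.pow_const (p - 2)).aestronglyMeasurable)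
  · rw [mul_right_comm, RCLike.conj_mul, ← RCLike.ofReal_pow, ← RCLike.ofReal_mul,
      ← Real.rpow_natCast, ← Real.rpow_add' (norm_nonneg _) (by simpa using hpq.ne_zero)]
    simp
  · rw [← ofReal_norm, ← ofReal_norm, norm_mul, RCLike.norm_conj, RCLike.norm_ofReal,
      abs_of_nonneg (by positivity),
      ← Real.rpow_one_add' (norm_nonneg _) (by linarith [hpq.sub_one_pos]),
      ENNReal.ofReal_rpow_of_nonneg (by positivity) hpq.symm.nonneg,
      ← Real.rpow_mul (norm_nonneg _),
      show (1 + (p - 2)) * q = p by linarith [hpq.sub_one_mul_conj],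
      ENNReal.ofReal_rpow_of_nonneg (norm_nonneg _) hpq.nonneg]

lemma eLpNorm_le_of_forall_enorm_integral_mul_le (hpq : p.HolderConjugate q) {v : α → 𝕜}
    (hv : MemLp v (ENNReal.ofReal p) μ) {C : ℝ≥0∞}
    (h : ∀ g : α → 𝕜, MemLp g (ENNReal.ofReal q) μ →
      ‖∫ x, g x * v x ∂μ‖ₑ ≤ C * eLpNorm g (ENNReal.ofReal q) μ) :
    eLpNorm v (ENNReal.ofReal p) μ ≤ C := by
  obtain ⟨g, hg_meas, hgv, hg_enorm⟩ := exists_mul_eq_norm_rpow hpq hv.1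
  set N := eLpNorm v (ENNReal.ofReal p) μ with hN
  have hN_rpow : ∫⁻ x, ‖v x‖ₑ ^ p ∂μ = N ^ p := by
    rw [hN, eLpNorm_ofReal_eq_lintegral_rpow_enorm hpq.pos, ENNReal.rpow_inv_rpow hpq.ne_zero]
  have hg_eLpNorm : eLpNorm g (ENNReal.ofReal q) μ = N ^ (p - 1) := by
    rw [eLpNorm_ofReal_eq_lintegral_rpow_enorm hpq.symm.pos]
    simp only [hg_enorm, hN_rpow, ← ENNReal.rpow_mul, ← div_eq_mul_inv, hpq.div_conj_eq_sub_one]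
  have hgv_enorm : ‖∫ x, g x * v x ∂μ‖ₑ = N ^ p := by
    have hv_int : Integrable (fun x => ‖v x‖ ^ p) μ := by
      simpa [hpq.nonneg] using
        hv.integrable_norm_rpow (by simpa using hpq.pos) ENNReal.ofReal_ne_top
    simp only [hgv]
    rw [integral_ofReal, ← ofReal_norm, RCLike.norm_ofReal,
      abs_of_nonneg (integral_nonneg fun x => by positivity), ← hN_rpow,
      ofReal_integral_eq_lintegral_ofReal hv_int (.of_forall fun x => by positivity)]
    simp only [← ENNReal.ofReal_rpow_of_nonneg (norm_nonneg _) hpq.nonneg, ofReal_norm]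
  have hN_top : N ^ (p - 1) ≠ ∞ := ENNReal.rpow_ne_top_of_nonneg hpq.sub_one_pos.le hv.2.ne
  have hpair := h g ⟨hg_meas, hg_eLpNorm ▸ hN_top.lt_top⟩
  rw [hg_eLpNorm, hgv_enorm] at hpair
  rcases eq_or_ne N 0 with hN0 | hN0
  · simp [hN0]
  · have hN_ne : N ^ (p - 1) ≠ 0 := (ENNReal.rpow_pos (pos_iff_ne_zero.2 hN0) hv.2.ne).ne'
    refine (ENNReal.mul_le_mul_iff_left hN_ne hN_top).1 (le_trans (le_of_eq ?_) hpair)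
    simpa using (ENNReal.rpow_add 1 (p - 1) hN0 hv.2.ne).symm

lemma eLpNorm_integral_mul_le_of_dual [IsFiniteMeasure μ] [IsFiniteMeasure ν]
    (hpq : p.HolderConjugate q) {k : α → β → 𝕜} (hk : Measurable (Function.uncurry k)) {M : ℝ}
    (hM : ∀ x y, ‖k x y‖ ≤ M) {C : ℝ≥0∞}
    (h : ∀ g : α → 𝕜, MemLp g (ENNReal.ofReal q) μ →
      eLpNorm (fun y => ∫ x, k x y * g x ∂μ) (ENNReal.ofReal q) ν
        ≤ C * eLpNorm g (ENNReal.ofReal q) μ)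
    {f : β → 𝕜} (hf : MemLp f (ENNReal.ofReal p) ν) :
    eLpNorm (fun x => ∫ y, k x y * f y ∂ν) (ENNReal.ofReal p) μ
      ≤ C * eLpNorm f (ENNReal.ofReal p) ν := by
  have hf_int : Integrable f ν := hf.integrable (by simpa using hpq.lt.le)
  have hkf (x : α) : ‖∫ y, k x y * f y ∂ν‖ ≤ M * ∫ y, ‖f y‖ ∂ν := by
    rw [← integral_const_mul]
    refine norm_integral_le_of_norm_le (hf_int.norm.const_mul M) (.of_forall fun y => ?_)
    rw [norm_mul]
    gcongr
    exact hM x y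
  have hkf_meas : AEStronglyMeasurable (fun x => ∫ y, k x y * f y ∂ν) μ :=
    (hk.aestronglyMeasurable.mul hf.1.comp_snd).integral_prod_right'
  refine eLpNorm_le_of_forall_enorm_integral_mul_le hpq
    (.of_bound hkf_meas _ (.of_forall hkf)) fun g hg => ?_
  have hg_int : Integrable g μ := hg.integrable (by simpa using hpq.symm.lt.le)
  have hkg_meas : AEStronglyMeasurable (fun y => ∫ x, k x y * g x ∂μ) ν :=
    (hk.aestronglyMeasurable.mul hg.1.comp_fst).prod_swap.integral_prod_right'
  have h_swap : ∫ x, g x * ∫ y, k x y * f y ∂ν ∂μ = ∫ y, f y * ∫ x, k x y * g x ∂μ ∂ν := by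
    simp only [← integral_const_mul]
    rw [integral_integral_swap]
    · simp only [mul_left_comm, mul_comm]
    · exact (((hg_int.mul_prod hf_int).bdd_mul hk.aestronglyMeasurable
        (.of_forall fun z => hM z.1 z.2)).congr (.of_forall fun z => by
          simp only [Function.uncurry]; ring))
  calc ‖∫ x, g x * ∫ y, k x y * f y ∂ν ∂μ‖ₑ
      ≤ eLpNorm f (ENNReal.ofReal p) ν *
        eLpNorm (fun y => ∫ x, k x y * g x ∂μ) (ENNReal.ofReal q) ν :=
        h_swap ▸ enorm_integral_mul_le_eLpNorm_mul_eLpNorm hpq hf.1 hkg_meas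
    _ ≤ eLpNorm f (ENNReal.ofReal p) ν * (C * eLpNorm g (ENNReal.ofReal q) μ) := by
        gcongr
        exact h g hg
    _ = C * eLpNorm f (ENNReal.ofReal p) ν * eLpNorm g (ENNReal.ofReal q) μ := by ring

lemma eLpNorm_integral_mul_add_le [SFinite ν] {k : α → β → 𝕜}
    (hk : Measurable (Function.uncurry k)) {M : ℝ} (hM : ∀ x y, ‖k x y‖ ≤ M) {p : ℝ≥0∞}
    (hp : 1 ≤ p) {f g : β → 𝕜} (hf : Integrable f ν) (hg : Integrable g ν) {c : 𝕜}
    (hc : ‖c‖ ≤ 1) :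
    eLpNorm (fun x => ∫ y, k x y * (f y + c * g y) ∂ν) p μ
      ≤ eLpNorm (fun x => ∫ y, k x y * f y ∂ν) p μ
        + eLpNorm (fun x => ∫ y, k x y * g y ∂ν) p μ := by
  have h_int {h : β → 𝕜} (hh : Integrable h ν) (x : α) : Integrable (fun y => k x y * h y) ν :=
    hh.bdd_mul hk.of_uncurry_left.aestronglyMeasurable (.of_forall (hM x))
  have h_meas {h : β → 𝕜} (hh : Integrable h ν) :
      AEStronglyMeasurable (fun x => ∫ y, k x y * h y ∂ν) μ :=
    (hk.aestronglyMeasurable.mul hh.1.comp_snd).integral_prod_right'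
  have h_split : (fun x => ∫ y, k x y * (f y + c * g y) ∂ν)
      = (fun x => ∫ y, k x y * f y ∂ν) + c • fun x => ∫ y, k x y * g y ∂ν := by
    ext x
    simp only [Pi.add_apply, Pi.smul_apply, smul_eq_mul, mul_add, mul_left_comm _ c]
    rw [integral_add (h_int hf x) ((h_int hg x).const_mul c), integral_const_mul]
  rw [h_split]
  refine (eLpNorm_add_le (h_meas hf) ((h_meas hg).const_smul c) hp).trans ?_
  gcongr
  refine eLpNorm_const_smul_le.trans (mul_le_of_le_one_left' ?_)
  rwa [← ofReal_norm, ENNReal.ofReal_le_one]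

lemma eLpNorm_integral_mul_ofReal_le_of_forall_nonneg [IsFiniteMeasure ν] {k : α → β → 𝕜}
    (hk : Measurable (Function.uncurry k)) {M : ℝ} (hM : ∀ x y, ‖k x y‖ ≤ M) {p : ℝ≥0∞}
    (hp : 1 ≤ p) {C : ℝ≥0∞}
    (h : ∀ g : β → ℝ, 0 ≤ g → MemLp g p ν →
      eLpNorm (fun x => ∫ y, k x y * (g y : 𝕜) ∂ν) p μ ≤ C * eLpNorm g p ν)
    {g : β → ℝ} (hg : MemLp g p ν) :
    eLpNorm (fun x => ∫ y, k x y * (g y : 𝕜) ∂ν) p μ ≤ 2 * C * eLpNorm g p ν := by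
  have h_split (y : β) : (g y : 𝕜) = (g⁺ y : ℝ) + (-1) * ((g⁻ y : ℝ) : 𝕜) := by
    rw [neg_one_mul, ← sub_eq_add_neg, ← RCLike.ofReal_sub, Pi.posPart_apply, Pi.negPart_apply,
      posPart_sub_negPart]
  have hg_pos : MemLp g⁺ p ν := hg.pos_part
  have hg_neg : MemLp g⁻ p ν := hg.neg.pos_part
  have h_pos_le : eLpNorm g⁺ p ν ≤ eLpNorm g p ν := eLpNorm_mono fun y => by
    rw [Pi.posPart_apply, Real.norm_of_nonneg (posPart_nonneg _), Real.norm_eq_abs,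
      ← posPart_add_negPart]
    exact le_add_of_nonneg_right (negPart_nonneg _)
  have h_neg_le : eLpNorm g⁻ p ν ≤ eLpNorm g p ν := eLpNorm_mono fun y => by
    rw [Pi.negPart_apply, Real.norm_of_nonneg (negPart_nonneg _), Real.norm_eq_abs,
      ← posPart_add_negPart]
    exact le_add_of_nonneg_left (posPart_nonneg _)
  simp only [h_split]
  calc eLpNorm (fun x => ∫ y, k x y * ((g⁺ y : ℝ) + (-1) * ((g⁻ y : ℝ) : 𝕜)) ∂ν) p μ
      ≤ C * eLpNorm g⁺ p ν + C * eLpNorm g⁻ p ν :=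
        (eLpNorm_integral_mul_add_le hk hM hp (hg_pos.integrable hp).ofReal
          (hg_neg.integrable hp).ofReal (by simp)).trans <|
            add_le_add (h _ (posPart_nonneg g) hg_pos) (h _ (negPart_nonneg g) hg_neg)
    _ ≤ C * eLpNorm g p ν + C * eLpNorm g p ν := by gcongr
    _ = 2 * C * eLpNorm g p ν := by ring

lemma eLpNorm_integral_mul_le_of_forall_nonneg [IsFiniteMeasure ν] {k : α → β → 𝕜}
    (hk : Measurable (Function.uncurry k)) {M : ℝ} (hM : ∀ x y, ‖k x y‖ ≤ M) {p : ℝ≥0∞}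
    (hp : 1 ≤ p) {C : ℝ≥0∞}
    (h : ∀ g : β → ℝ, 0 ≤ g → MemLp g p ν →
      eLpNorm (fun x => ∫ y, k x y * (g y : 𝕜) ∂ν) p μ ≤ C * eLpNorm g p ν)
    {f : β → 𝕜} (hf : MemLp f p ν) :
    eLpNorm (fun x => ∫ y, k x y * f y ∂ν) p μ ≤ 4 * C * eLpNorm f p ν := by
  have h_real {g : β → ℝ} (hg : MemLp g p ν) :=
    eLpNorm_integral_mul_ofReal_le_of_forall_nonneg hk hM hp h hg
  have h_re_le : eLpNorm (fun y => RCLike.re (f y)) p ν ≤ eLpNorm f p ν :=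
    eLpNorm_mono fun y => RCLike.norm_re_le_norm (f y)
  have h_im_le : eLpNorm (fun y => RCLike.im (f y)) p ν ≤ eLpNorm f p ν :=
    eLpNorm_mono fun y => RCLike.norm_im_le_norm (f y)
  have h_split (y : β) : f y = (RCLike.re (f y) : 𝕜) + RCLike.I * (RCLike.im (f y) : 𝕜) := by
    rw [mul_comm, RCLike.re_add_im]
  calc eLpNorm (fun x => ∫ y, k x y * f y ∂ν) p μ
      = eLpNorm (fun x => ∫ y, k x y *
          ((RCLike.re (f y) : 𝕜) + RCLike.I * (RCLike.im (f y) : 𝕜)) ∂ν) p μ := by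
        simp only [← h_split]
    _ ≤ 2 * C * eLpNorm (fun y => RCLike.re (f y)) p ν
          + 2 * C * eLpNorm (fun y => RCLike.im (f y)) p ν :=
        (eLpNorm_integral_mul_add_le hk hM hp (hf.re.integrable hp).ofReal
          (hf.im.integrable hp).ofReal (by rw [RCLike.norm_I]; split_ifs <;> simp)).trans <|
            add_le_add (h_real hf.re) (h_real hf.im)
    _ ≤ 2 * C * eLpNorm f p ν + 2 * C * eLpNorm f p ν := by gcongr
    _ = 4 * C * eLpNorm f p ν := by ring

end Lp

section ArcMeasure

/-- Normalized arc length `dt / 2π` on the parameter interval `(0, 2π]` of the unit circle. -/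
def arcMeasure : Measure ℝ := ProbabilityTheory.cond volume (Ioc 0 (2 * π))

instance : IsProbabilityMeasure arcMeasure :=
  ProbabilityTheory.cond_isProbabilityMeasure_of_finite (by simp [Real.pi_pos])
    measure_Ioc_lt_top.ne

lemma arcMeasure_eq_smul_restrict :
    arcMeasure = ENNReal.ofReal (2 * π)⁻¹ • volume.restrict (Ioc 0 (2 * π)) := by
  rw [arcMeasure, ProbabilityTheory.cond, Real.volume_Ioc, sub_zero,
    ENNReal.ofReal_inv_of_pos Real.two_pi_pos]

lemma ae_arcMeasure_of_forall_mem_Ioc {P : ℝ → Prop} (h : ∀ t ∈ Ioc 0 (2 * π), P t) :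
    ∀ᵐ t ∂arcMeasure, P t := by
  rw [arcMeasure_eq_smul_restrict]
  exact Measure.ae_smul_measure (ae_restrict_of_forall_mem measurableSet_Ioc h) _

variable {E : Type*} [NormedAddCommGroup E]

lemma memLp_arcMeasure_iff {f : ℝ → E} {p : ℝ≥0∞} :
    MemLp f p arcMeasure ↔ MemLp f p (volume.restrict (Ioc 0 (2 * π))) := by
  have hc : ENNReal.ofReal (2 * π)⁻¹ ≠ 0 := by simpa using Real.pi_pos
  refine ⟨fun hf => ?_, fun hf => ?_⟩
  · have := hf.smul_measure (c := (ENNReal.ofReal (2 * π)⁻¹)⁻¹) (by simpa using hc)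
    rwa [arcMeasure_eq_smul_restrict, smul_smul,
      ENNReal.inv_mul_cancel hc ENNReal.ofReal_ne_top, one_smul] at this
  · exact arcMeasure_eq_smul_restrict ▸ hf.smul_measure ENNReal.ofReal_ne_top

lemma integrable_arcMeasure_iff {f : ℝ → E} :
    Integrable f arcMeasure ↔ IntervalIntegrable f volume 0 (2 * π) := by
  rw [← memLp_one_iff_integrable, memLp_arcMeasure_iff, memLp_one_iff_integrable,
    intervalIntegrable_iff_integrableOn_Ioc_of_le Real.two_pi_pos.le, IntegrableOn]

variable [NormedSpace ℝ E]

lemma integral_arcMeasure (f : ℝ → E) :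
    ∫ t, f t ∂arcMeasure = (2 * π)⁻¹ • ∫ t in 0..2 * π, f t := by
  rw [arcMeasure_eq_smul_restrict, integral_smul_measure,
    ENNReal.toReal_ofReal (by positivity), intervalIntegral.integral_of_le Real.two_pi_pos.le]

lemma circleAverage_eq_integral_arcMeasure (f : ℂ → E) (c : ℂ) (R : ℝ) :
    circleAverage f c R = ∫ t, f (circleMap c R t) ∂arcMeasure := by
  rw [integral_arcMeasure, Real.circleAverage_def]

end ArcMeasure

section HerglotzKernel

variable {z ζ : ℂ} {r : ℝ}

lemma norm_herglotzRieszKernel_le (hz : ‖z‖ < 1) (hζ : ‖ζ‖ = 1) :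
    ‖herglotzRieszKernel 0 z ζ‖ ≤ 2 / (1 - ‖z‖) := by
  have h_num : ‖ζ + z‖ ≤ 2 := (norm_add_le _ _).trans (by linarith)
  have h_den : 1 - ‖z‖ ≤ ‖ζ - z‖ := hζ ▸ norm_sub_norm_le ζ z
  rw [herglotzRieszKernel_def, sub_zero, sub_zero, norm_div]
  gcongr

lemma re_herglotzRieszKernel_pos (hz : ‖z‖ < 1) (hζ : ‖ζ‖ = 1) :
    0 < (herglotzRieszKernel 0 z ζ).re := by
  refine lt_of_lt_of_le ?_ (le_re_herglotzRieszKernel (mem_sphere_zero_iff_norm.2 hζ)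
    (mem_ball_zero_iff.2 hz))
  rw [sub_zero]
  have := norm_nonneg z
  exact div_pos (by linarith) (by linarith)

lemma conj_herglotzRieszKernel_circleMap (r θ t : ℝ) :
    conj (herglotzRieszKernel 0 (circleMap 0 r θ) (circleMap 0 1 t))
      = herglotzRieszKernel 0 (circleMap 0 r t) (circleMap 0 1 θ) := by
  have hθ : conj (cexp (θ * I)) = (cexp (θ * I))⁻¹ := by
    rw [← Complex.exp_conj, ← Complex.exp_neg]; simp
  have ht : conj (cexp (t * I)) = (cexp (t * I))⁻¹ := by
    rw [← Complex.exp_conj, ← Complex.exp_neg]; simp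
  simp only [herglotzRieszKernel_def, circleMap_zero, sub_zero, map_div₀, map_add, map_sub,
    map_mul, Complex.conj_ofReal, hθ, ht, ofReal_one, one_mul]
  field_simp

lemma continuous_herglotzRieszKernel_circleMap (hr : |r| < 1) :
    Continuous (Function.uncurry fun θ t : ℝ =>
      herglotzRieszKernel 0 (circleMap 0 r θ) (circleMap 0 1 t)) := by
  simp only [herglotzRieszKernel_def, sub_zero, Function.uncurry_def]
  refine .div (by fun_prop) (by fun_prop) fun x hx => ?_
  have := congrArg norm (sub_eq_zero.1 hx)
  rw [norm_circleMap_zero, norm_circleMap_zero, abs_one] at this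
  linarith

lemma circleAverage_re_herglotzRieszKernel (hz : ‖z‖ < 1) :
    circleAverage (fun ζ => (herglotzRieszKernel 0 z ζ).re) 0 1 = 1 := by
  simpa [Pi.mul_def] using InnerProductSpace.harmonicContOnCl_const (c := (1 : ℝ))
    |>.circleAverage_re_herglotzRieszKernel_smul (mem_ball_zero_iff.2 hz)

lemma poissonKer_mul_exp_neg (z : ℂ) (t : ℝ) :
    poissonKer (z * cexp (-t * I)) = (herglotzRieszKernel 0 z (circleMap 0 1 t)).re := by
  have h_norm : ‖cexp (-t * I)‖ = 1 := by
    rw [← ofReal_neg, Complex.norm_exp_ofReal_mul_I]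
  have h_den : 1 - z * cexp (-t * I) = (cexp (t * I) - z) * cexp (-t * I) := by
    rw [sub_mul, ← Complex.exp_add]; simp
  have h_re := congrFun (poissonKernel_eq_re_herglotzRieszKernel (c := 0) (w := z))
    (circleMap 0 1 t)
  rw [Function.comp_apply, poissonKernel_def] at h_re
  rw [← h_re, poissonKer, h_den, norm_mul, norm_mul, h_norm]
  simp [circleMap_zero]

end HerglotzKernel

section HerglotzInt

/-- The Herglotz integral of a function on the unit circle, i.e. the circle average of
`(ζ + z) / (ζ - z) * f ζ`. It is analytic in the disk; for real `f` its real and imaginary parts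
are the Poisson integral of `f` and its harmonic conjugate. -/
def herglotzInt (f : ℂ → ℂ) (z : ℂ) : ℂ :=
  circleAverage (fun ζ => herglotzRieszKernel 0 z ζ • f ζ) 0 1

/-- The conjugate Poisson integral of a function on the unit circle. It is `conjPoissonIntR` for
functions of `ζ = e^{it}` in place of `t`. -/
def conjPoissonInt (f : ℂ → ℂ) (z : ℂ) : ℂ :=
  circleAverage (fun ζ => (herglotzRieszKernel 0 z ζ).im • f ζ) 0 1

variable {f : ℂ → ℂ} {z : ℂ}

lemma circleAverage_conj (f : ℂ → ℂ) (c : ℂ) (R : ℝ) :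
    circleAverage (fun ζ => conj (f ζ)) c R = conj (circleAverage f c R) := by
  simp only [circleAverage_eq_integral_arcMeasure, integral_conj]

lemma intervalIntegrable_conj {φ : ℝ → ℂ} {a b : ℝ} (hφ : IntervalIntegrable φ volume a b) :
    IntervalIntegrable (fun t => conj (φ t)) volume a b :=
  ⟨(LinearIsometryEquiv.integrable_comp_iff conjLIE).2 hφ.1,
    (LinearIsometryEquiv.integrable_comp_iff conjLIE).2 hφ.2⟩

lemma circleIntegrable_herglotzRieszKernel_smul (hf : CircleIntegrable f 0 1) (hz : ‖z‖ < 1) :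
    CircleIntegrable (fun ζ => herglotzRieszKernel 0 z ζ • f ζ) 0 1 :=
  hf.continuousOn_smul (continuousOn_herglotzRieszKernel_sphere (mem_ball_zero_iff.2 hz))

lemma differentiableOn_herglotzInt (hf : CircleIntegrable f 0 1) :
    DifferentiableOn ℂ (herglotzInt f) (ball 0 1) :=
  differentiableOn_circleAverage_herglotzRieszKernel_smul hf

lemma circleAverage_re_smul_eq_herglotzInt_add_conj (hf : CircleIntegrable f 0 1) (hz : ‖z‖ < 1)
    (c : ℂ) :
    circleAverage (fun ζ => (2 * (c * herglotzRieszKernel 0 z ζ).re) • f ζ) 0 1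
      = c * herglotzInt f z + conj (c * herglotzInt (fun ζ => conj (f ζ)) z) := by
  have h_kernel (k w : ℂ) : (2 * (c * k).re) • w = c • k • w + conj (c • k • conj w) := by
    rw [real_smul, ← add_conj]
    simp only [smul_eq_mul, map_mul, conj_conj]
    ring
  have h_int := (circleIntegrable_herglotzRieszKernel_smul hf hz).const_fun_smul (a := c)
  have hf_conj : CircleIntegrable (fun ζ => conj (f ζ)) 0 1 := intervalIntegrable_conj hf
  have h_int' : CircleIntegrable
      (fun ζ => conj (c • herglotzRieszKernel 0 z ζ • conj (f ζ))) 0 1 :=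
    intervalIntegrable_conj
      (circleIntegrable_herglotzRieszKernel_smul hf_conj hz).const_fun_smul
  simp only [h_kernel]
  rw [Real.circleAverage_fun_add h_int h_int', circleAverage_conj, Real.circleAverage_fun_smul,
    Real.circleAverage_fun_smul]
  rfl

lemma poissonInt_eq_herglotzInt_add_conj (hf : CircleIntegrable f 0 1) (hz : ‖z‖ < 1) :
    poissonInt f z
      = 1 / 2 * herglotzInt f z + conj (1 / 2 * herglotzInt (fun ζ => conj (f ζ)) z) := by
  rw [← circleAverage_re_smul_eq_herglotzInt_add_conj hf hz, poissonInt, Real.circleAverage_def,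
    real_smul]
  congr 1
  · simp
  · refine intervalIntegral.integral_congr fun t _ => ?_
    simp only [poissonKer_mul_exp_neg]
    simp [circleMap_zero]

lemma two_mul_re_neg_I_div_two_mul (w : ℂ) : 2 * (-I / 2 * w).re = w.im := by
  rw [neg_div, neg_mul, neg_re, div_mul_eq_mul_div, div_ofNat_re, I_mul_re]
  ring

lemma conjPoissonInt_eq_herglotzInt_add_conj (hf : CircleIntegrable f 0 1) (hz : ‖z‖ < 1) :
    conjPoissonInt f z
      = -I / 2 * herglotzInt f z + conj (-I / 2 * herglotzInt (fun ζ => conj (f ζ)) z) := by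
  rw [← circleAverage_re_smul_eq_herglotzInt_add_conj hf hz]
  simp only [conjPoissonInt, two_mul_re_neg_I_div_two_mul]

end HerglotzInt

section IntegrationByParts

variable {a b : ℝ}

lemma integral_integral_swap_triangle {E : Type*} [NormedAddCommGroup E] [NormedSpace ℝ E]
    {f : ℝ → ℝ → E} (hab : a ≤ b)
    (hf : IntegrableOn (Function.uncurry f) (Ioc a b ×ˢ Ioc a b)) :
    ∫ t in a..b, ∫ s in a..t, f t s = ∫ s in a..b, ∫ t in s..b, f t s := by
  have h_left : ∀ t ∈ Ioc a b, ∫ s in a..t, f t s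
      = ∫ s in Ioc a b, indicator {x : ℝ × ℝ | x.2 ≤ x.1} (Function.uncurry f) (t, s) := by
    intro t ht
    have h_inter : Ioc a t = Ioc a b ∩ Iic t := by rw [Ioc_inter_Iic, inf_eq_right.2 ht.2]
    rw [intervalIntegral.integral_of_le ht.1.le, h_inter, ← setIntegral_indicator measurableSet_Iic]
    rfl
  have h_right : ∀ s ∈ Ioc a b, ∫ t in s..b, f t s
      = ∫ t in Ioc a b, indicator {x : ℝ × ℝ | x.2 ≤ x.1} (Function.uncurry f) (t, s) := by
    intro s hs
    have h_inter : Icc s b = Ioc a b ∩ Ici s := by ext t; grind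
    rw [intervalIntegral.integral_of_le hs.2, ← integral_Icc_eq_integral_Ioc, h_inter,
      ← setIntegral_indicator measurableSet_Ici]
    rfl
  rw [intervalIntegral.integral_of_le hab, intervalIntegral.integral_of_le hab,
    setIntegral_congr_fun measurableSet_Ioc h_left,
    setIntegral_congr_fun measurableSet_Ioc h_right]
  refine integral_integral_swap ?_
  rw [Measure.prod_restrict]
  exact hf.indicator (measurableSet_le measurable_snd measurable_fst)

lemma integral_deriv_mul_primitive {h h' φ : ℝ → ℂ} (hab : a ≤ b)
    (hh : ∀ t, HasDerivAt h (h' t) t) (hh' : Continuous h') (hφ : IntervalIntegrable φ volume a b) :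
    ∫ t in a..b, h' t * ∫ s in a..t, φ s = ∫ s in a..b, (h b - h s) * φ s := by
  have hφ' := (intervalIntegrable_iff_integrableOn_Ioc_of_le hab).1 hφ
  have h_int : IntegrableOn (Function.uncurry fun t s => h' t * φ s) (Ioc a b ×ˢ Ioc a b) := by
    rw [IntegrableOn, Measure.volume_eq_prod, ← Measure.prod_restrict]
    exact (hh'.integrableOn_Ioc (a := a) (b := b)).mul_prod hφ'
  simp only [← intervalIntegral.integral_const_mul]
  rw [integral_integral_swap_triangle hab h_int]
  refine intervalIntegral.integral_congr fun s _ => ?_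
  rw [intervalIntegral.integral_mul_const, intervalIntegral.integral_eq_sub_of_hasDerivAt
    (fun t _ => hh t) (hh'.intervalIntegrable _ _)]

end IntegrationByParts

section RadialDerivative

variable {F f : ℂ → ℂ} {Fd : ℝ → ℂ} {z : ℂ}

lemma IsACDeriv.circleIntegrable (hF : IsACDeriv F Fd) : CircleIntegrable F 0 1 := by
  refine Continuous.intervalIntegrable ?_ _ _
  simp only [circleMap_zero, ofReal_one, one_mul, hF.2.2]
  exact continuous_const.add (intervalIntegral.continuous_primitive hF.1 0)

lemma IsACDeriv.conj (hF : IsACDeriv F Fd) :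
    IsACDeriv (fun ζ => conj (F ζ)) fun t => conj (Fd t) := by
  refine ⟨fun a b => intervalIntegrable_conj (hF.1 a b), fun t => by simp only [hF.2.1 t],
    fun t => ?_⟩
  simp only [hF.2.2, map_add, intervalIntegral.intervalIntegral_eq_integral_uIoc, integral_conj]
  split_ifs <;> simp

lemma IsACDeriv.integral_deriv_mul (hF : IsACDeriv F Fd) {h h' : ℝ → ℂ}
    (hh : ∀ t, HasDerivAt h (h' t) t) (hh' : Continuous h') (h_per : h (2 * π) = h 0) :
    ∫ t in 0..2 * π, h' t * F (circleMap 0 1 t) = -∫ t in 0..2 * π, h t * Fd t := by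
  have hh_cont : Continuous h := continuous_iff_continuousAt.2 fun t => (hh t).continuousAt
  have h_prim : Continuous fun t => ∫ s in 0..t, Fd s :=
    intervalIntegral.continuous_primitive hF.1 0
  have h_total : ∫ t in 0..2 * π, Fd t = 0 := by simpa using hF.2.2 (2 * π)
  have h_const : ∫ t in 0..2 * π, h' t = 0 := by
    rw [intervalIntegral.integral_eq_sub_of_hasDerivAt (fun t _ => hh t)
      (hh'.intervalIntegrable _ _), h_per, sub_self]
  simp only [circleMap_zero, ofReal_one, one_mul, hF.2.2, mul_add]
  rw [intervalIntegral.integral_add (hh'.fun_mul continuous_const |>.intervalIntegrable _ _)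
      (hh'.fun_mul h_prim |>.intervalIntegrable _ _),
    integral_deriv_mul_primitive Real.two_pi_pos.le hh hh' (hF.1 _ _)]
  simp only [sub_mul]
  rw [intervalIntegral.integral_sub ((hF.1 _ _).const_mul _)
      ((hF.1 _ _).continuousOn_mul hh_cont.continuousOn),
    intervalIntegral.integral_mul_const, intervalIntegral.integral_const_mul, h_const, h_total]
  simp

lemma circleMap_sub_ne_zero (hz : ‖z‖ < 1) (t : ℝ) : circleMap 0 1 t - z ≠ 0 := by
  rintro h
  rw [← sub_eq_zero.1 h, norm_circleMap_zero, abs_one] at hz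
  exact hz.false

lemma hasDerivAt_herglotzRieszKernel_circleMap (hz : ‖z‖ < 1) (t : ℝ) :
    HasDerivAt (fun t => herglotzRieszKernel 0 z (circleMap 0 1 t))
      (-I * (z * (2 * circleMap 0 1 t / (circleMap 0 1 t - z) ^ 2))) t := by
  have h_ne := circleMap_sub_ne_zero hz t
  have h_map := hasDerivAt_circleMap 0 1 t
  simp only [herglotzRieszKernel_def, sub_zero]
  refine ((h_map.add_const z).fun_div (h_map.sub_const z) h_ne).congr_deriv ?_
  field_simp
  ring

lemma IsACDeriv.mul_deriv_herglotzInt (hF : IsACDeriv F fun t => f (circleMap 0 1 t))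
    (hz : ‖z‖ < 1) : z * deriv (herglotzInt F) z = -I * herglotzInt f z := by
  have h_deriv : deriv (herglotzInt F) z = _ :=
    (hasDerivAt_circleAverage_herglotzRieszKernel_smul hF.circleIntegrable
      (mem_ball_zero_iff.2 hz)).deriv
  have h_parts := hF.integral_deriv_mul (hasDerivAt_herglotzRieszKernel_circleMap hz)
    (continuous_const.mul <| continuous_const.mul <| .div (by fun_prop) (by fun_prop)
      fun t => pow_ne_zero 2 (circleMap_sub_ne_zero hz t))
    (by simp [circleMap_zero])
  rw [h_deriv, herglotzInt, Real.circleAverage_def, Real.circleAverage_def]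
  simp only [mul_assoc, intervalIntegral.integral_const_mul] at h_parts
  simp only [smul_eq_mul, mul_smul_comm]
  congr 1
  linear_combination I * h_parts + z * (∫ t in 0..2 * π,
    2 * circleMap 0 1 t / (circleMap 0 1 t - z) ^ 2 * F (circleMap 0 1 t)) * I_sq

lemma rFr_eq_of_eventuallyEq_add_conj {g A B : ℂ → ℂ} {A' B' : ℂ} (hA : HasDerivAt A A' z)
    (hB : HasDerivAt B B' z) (hg : g =ᶠ[𝓝 z] fun w => A w + conj (B w)) :
    rFr g z = z * A' + conj (z * B') := by
  have h_conj := conjCLE.toContinuousLinearMap.hasFDerivAt.comp z hB.complexToReal_fderiv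
  have h_fderiv := ((hA.complexToReal_fderiv.add h_conj).congr_of_eventuallyEq hg).fderiv
  have h_apply (v : ℂ) : fderiv ℝ g z v = A' * v + conj (B' * v) := by simp [h_fderiv]
  have h_wdz : wdz g z = A' := by
    simp only [wdz, h_apply, map_mul, conj_I, mul_one]
    linear_combination (conj B' - A') / 2 * I_sq
  have h_wdzb : wdzb g z = conj B' := by
    simp only [wdzb, h_apply, map_mul, conj_I, mul_one]
    linear_combination (A' - conj B') / 2 * I_sq
  rw [rFr, h_wdz, h_wdzb, map_mul]

lemma IsACDeriv.rFr_poissonInt_eq_conjPoissonInt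
    (hF : IsACDeriv F fun t => f (circleMap 0 1 t)) (hz : ‖z‖ < 1) :
    rFr (poissonInt F) z = conjPoissonInt f z := by
  have h_deriv {G : ℂ → ℂ} (hG : CircleIntegrable G 0 1) :
      HasDerivAt (herglotzInt G) (deriv (herglotzInt G) z) z :=
    ((differentiableOn_herglotzInt hG).differentiableAt
      (isOpen_ball.mem_nhds (mem_ball_zero_iff.2 hz))).hasDerivAt
  have hf : CircleIntegrable f 0 1 := hF.1 0 (2 * π)
  have h_poisson := eventually_of_mem (isOpen_ball.mem_nhds (mem_ball_zero_iff.2 hz))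
    fun w hw => poissonInt_eq_herglotzInt_add_conj hF.circleIntegrable (mem_ball_zero_iff.1 hw)
  rw [rFr_eq_of_eventuallyEq_add_conj ((h_deriv hF.circleIntegrable).const_mul _)
      ((h_deriv hF.conj.circleIntegrable).const_mul _) h_poisson,
    conjPoissonInt_eq_herglotzInt_add_conj hf hz, mul_left_comm, mul_left_comm z,
    hF.mul_deriv_herglotzInt hz, hF.conj.mul_deriv_herglotzInt (f := fun ζ => conj (f ζ)) hz]
  ring_nf

end RadialDerivative

section Harmonic

variable {f : ℂ → ℂ}

lemma harmonicOnD_of_harmonicOnNhd {g : ℂ → ℂ}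
    (hg : InnerProductSpace.HarmonicOnNhd g (ball 0 1)) : HarmonicOnD g := by
  refine ⟨fun z hz => (hg z hz).1.contDiffWithinAt, fun z hz => ?_⟩
  have h_fderiv : DifferentiableAt ℝ (fderiv ℝ g) z :=
    ((hg z hz).1.fderiv_right (m := 1) (by norm_num)).differentiableAt (by norm_num)
  have h_second (v : ℂ) : fderiv ℝ (fun w => fderiv ℝ g w v) z v
      = fderiv ℝ (fderiv ℝ g) z v v := by
    rw [(h_fderiv.hasFDerivAt.clm_apply (hasFDerivAt_const v z)).fderiv]
    simp
  have h_laplacian := (hg z hz).2.self_of_nhds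
  rw [InnerProductSpace.laplacian_eq_iteratedFDeriv_complexPlane] at h_laplacian
  simpa [iteratedFDeriv_two_apply, h_second] using h_laplacian

lemma harmonicOnNhd_conjPoissonInt (hf : CircleIntegrable f 0 1) :
    InnerProductSpace.HarmonicOnNhd (conjPoissonInt f) (ball 0 1) := by
  intro z hz
  have h_nhds := isOpen_ball.mem_nhds hz
  have hf_conj : CircleIntegrable (fun ζ => conj (f ζ)) 0 1 := intervalIntegrable_conj hf
  have h_left := ((differentiableOn_herglotzInt hf).const_mul (-I / 2)).analyticAt h_nhds
  have h_right := ((differentiableOn_herglotzInt hf_conj).const_mul (-I / 2)).analyticAt h_nhds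
  refine (InnerProductSpace.harmonicAt_congr_nhds (eventually_of_mem h_nhds fun w hw => ?_)).2
    (h_left.harmonicAt.add h_right.harmonicAt_conj)
  exact conjPoissonInt_eq_herglotzInt_add_conj hf (mem_ball_zero_iff.1 hw)

end Harmonic

section RightHalfPlane

variable {p : ℝ}

lemma exists_one_le_mul_cos_rpow_sub_mul_cos_mul (hp : 1 < p) (hp2 : p ≤ 2) :
    ∃ A B : ℝ, 0 ≤ A ∧ 0 ≤ B ∧ ∀ θ : ℝ, |θ| < π / 2 →
      1 ≤ A * Real.cos θ ^ p - B * Real.cos (θ * p) := by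
  have hp0 : 0 < p := by linarith
  -- Up to `θ₀` the first term dominates, since `cos θ ≥ cos θ₀ > 0`; beyond it `cos (θ * p)` is
  -- negative and the second term suffices.
  obtain ⟨θ₀, hθ₀p, hθ₀⟩ : ∃ θ₀, π / 2 / p < θ₀ ∧ θ₀ < π / 2 :=
    exists_between (div_lt_self (by positivity) hp)
  have hθ₀_pos : 0 < θ₀ := lt_trans (by positivity) hθ₀p
  rw [div_lt_iff₀ hp0] at hθ₀p
  have h_cos : 0 < Real.cos θ₀ := Real.cos_pos_of_mem_Ioo ⟨by linarith, hθ₀⟩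
  have h_cos_mul : Real.cos (θ₀ * p) < 0 :=
    Real.cos_neg_of_pi_div_two_lt_of_lt hθ₀p (by nlinarith)
  set B := -(Real.cos (θ₀ * p))⁻¹
  have hB : 0 ≤ B := by simpa [B] using h_cos_mul.le
  have hB_mul : B * Real.cos (θ₀ * p) = -1 := by
    rw [neg_mul, inv_mul_cancel₀ h_cos_mul.ne]
  refine ⟨(1 + B) / Real.cos θ₀ ^ p, B, by positivity, hB, fun θ hθ => ?_⟩
  rw [← Real.cos_abs θ, ← Real.cos_abs (θ * p), abs_mul, abs_of_pos hp0]
  set φ := |θ|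
  have hφ : 0 ≤ φ := abs_nonneg θ
  have h_cos_nonneg : 0 ≤ Real.cos φ := Real.cos_nonneg_of_mem_Icc ⟨by linarith, hθ.le⟩
  rcases le_total φ θ₀ with h | h
  · have h_first : 1 + B ≤ (1 + B) / Real.cos θ₀ ^ p * Real.cos φ ^ p := by
      rw [div_mul_eq_mul_div, le_div_iff₀ (by positivity)]
      have := Real.cos_le_cos_of_nonneg_of_le_pi hφ (by linarith) h
      gcongr
    have h_second := mul_le_of_le_one_right hB (Real.cos_le_one (φ * p))
    linarith
  · have h_first : 0 ≤ (1 + B) / Real.cos θ₀ ^ p * Real.cos φ ^ p := by positivity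
    have h_second : B * Real.cos (φ * p) ≤ B * Real.cos (θ₀ * p) := by
      gcongr
      exact Real.cos_le_cos_of_nonneg_of_le_pi (by positivity) (by nlinarith) (by gcongr)
    linarith

lemma exists_norm_rpow_le_mul_re_rpow_sub_mul_re_cpow (hp : 1 < p) (hp2 : p ≤ 2) :
    ∃ A B : ℝ, 0 ≤ A ∧ 0 ≤ B ∧ ∀ w : ℂ, 0 < w.re →
      ‖w‖ ^ p ≤ A * w.re ^ p - B * (w ^ (p : ℂ)).re := by
  obtain ⟨A, B, hA, hB, hAB⟩ := exists_one_le_mul_cos_rpow_sub_mul_cos_mul hp hp2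
  refine ⟨A, B, hA, hB, fun w hw => ?_⟩
  have h_cos : 0 ≤ Real.cos w.arg := Real.cos_nonneg_of_mem_Icc <|
    abs_le.1 (Complex.abs_arg_le_pi_div_two_iff.2 hw.le)
  calc ‖w‖ ^ p
      ≤ ‖w‖ ^ p * (A * Real.cos w.arg ^ p - B * Real.cos (w.arg * p)) :=
        le_mul_of_one_le_right (by positivity)
          (hAB w.arg (Complex.abs_arg_lt_pi_div_two_iff.2 (.inl hw)))
    _ = A * w.re ^ p - B * (w ^ (p : ℂ)).re := by
        rw [Complex.cpow_ofReal_re, ← Complex.norm_mul_cos_arg w,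
          Real.mul_rpow (norm_nonneg _) h_cos]
        ring

lemma circleAverage_re_cpow_nonneg {G : ℂ → ℂ} {c : ℂ} {R : ℝ}
    (hG : DifferentiableOn ℂ G (closedBall c |R|)) (hG_re : ∀ z ∈ closedBall c |R|, 0 < (G z).re)
    (hG_im : (G c).im = 0) (p : ℝ) : 0 ≤ circleAverage (fun z => (G z ^ (p : ℂ)).re) c R := by
  have hGp : DifferentiableOn ℂ (fun z => G z ^ (p : ℂ)) (closedBall c |R|) :=
    hG.cpow (differentiableOn_const _) fun z hz => .inl (hG_re z hz)
  have h_int : CircleIntegrable (fun z => G z ^ (p : ℂ)) c R :=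
    (hGp.continuousOn.mono sphere_subset_closedBall).circleIntegrable'
  have hc : 0 < (G c).re := hG_re c (mem_closedBall_self (abs_nonneg R))
  calc (0 : ℝ) ≤ (G c).re ^ p := by positivity
    _ = (G c ^ (p : ℂ)).re := by
        rw [← ofReal_re ((G c).re ^ p), ofReal_cpow hc.le]
        congr 2
        exact Complex.ext rfl hG_im.symm
    _ = circleAverage (fun z => (G z ^ (p : ℂ)).re) c R := by
        rw [← (hGp.mono closure_ball_subset_closedBall).diffContOnCl.circleAverage]
        exact (reCLM.circleAverage_comp_comm h_int).symm

lemma exists_circleAverage_norm_rpow_le_of_re_pos (hp : 1 < p) (hp2 : p ≤ 2) :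
    ∃ A : ℝ, 0 ≤ A ∧ ∀ {G : ℂ → ℂ} {c : ℂ} {R : ℝ}, DifferentiableOn ℂ G (closedBall c |R|) →
      (∀ z ∈ closedBall c |R|, 0 < (G z).re) → (G c).im = 0 →
      circleAverage (fun z => ‖G z‖ ^ p) c R ≤ A * circleAverage (fun z => (G z).re ^ p) c R := by
  obtain ⟨A, B, hA, hB, hAB⟩ := exists_norm_rpow_le_mul_re_rpow_sub_mul_re_cpow hp hp2
  refine ⟨A, hA, fun {G c R} hG hG_re hG_im => ?_⟩
  have hp0 : 0 ≤ p := by linarith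
  have hG_cont : ContinuousOn G (sphere c |R|) := hG.continuousOn.mono sphere_subset_closedBall
  have h_norm : CircleIntegrable (fun z => ‖G z‖ ^ p) c R :=
    (hG_cont.norm.rpow_const fun _ _ => .inr hp0).circleIntegrable'
  have h_re : CircleIntegrable (fun z => A * (G z).re ^ p) c R :=
    (((continuous_re.comp_continuousOn hG_cont).rpow_const fun _ _ =>
      .inr hp0).const_mul A).circleIntegrable'
  have h_cpow : CircleIntegrable (fun z => B * (G z ^ (p : ℂ)).re) c R :=
    ((continuous_re.comp_continuousOn <| hG_cont.cpow continuousOn_const fun z hz =>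
      .inl (hG_re z (sphere_subset_closedBall hz))).const_mul B).circleIntegrable'
  calc circleAverage (fun z => ‖G z‖ ^ p) c R
      ≤ circleAverage (fun z => A * (G z).re ^ p - B * (G z ^ (p : ℂ)).re) c R :=
        Real.circleAverage_mono h_norm (h_re.sub h_cpow) fun z hz =>
          hAB _ (hG_re z (sphere_subset_closedBall hz))
    _ = A * circleAverage (fun z => (G z).re ^ p) c R
          - B * circleAverage (fun z => (G z ^ (p : ℂ)).re) c R := by
        rw [Real.circleAverage_fun_sub h_re h_cpow]
        simp only [← smul_eq_mul, Real.circleAverage_fun_smul]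
    _ ≤ A * circleAverage (fun z => (G z).re ^ p) c R :=
        sub_le_self _ (mul_nonneg hB (circleAverage_re_cpow_nonneg hG hG_re hG_im p))

end RightHalfPlane

section CircleNorms

variable {E : Type*} [NormedAddCommGroup E] {f : ℂ → E} {c : ℂ} {R p : ℝ}

lemma eLpNorm_circleMap_eq_circleAverage (hf : ContinuousOn f (sphere c |R|)) (hp : 0 < p) :
    eLpNorm (fun θ => f (circleMap c R θ)) (ENNReal.ofReal p) arcMeasure
      = ENNReal.ofReal (circleAverage (fun z => ‖f z‖ ^ p) c R ^ p⁻¹) := by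
  have hf_comp : Continuous fun θ => f (circleMap c R θ) :=
    hf.comp_continuous (continuous_circleMap c R) (circleMap_mem_sphere' c R)
  obtain ⟨M, hM⟩ := (isCompact_sphere c |R|).exists_bound_of_continuousOn hf
  have h_memLp : MemLp (fun θ => f (circleMap c R θ)) (ENNReal.ofReal p) arcMeasure :=
    .of_bound hf_comp.aestronglyMeasurable M
      (.of_forall fun θ => hM _ (circleMap_mem_sphere' c R θ))
  rw [h_memLp.eLpNorm_eq_integral_rpow_norm (by simpa) ENNReal.ofReal_ne_top,
    ENNReal.toReal_ofReal hp.le, circleAverage_eq_integral_arcMeasure]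

lemma exists_eLpNorm_circleMap_le_eLpNorm_re (hp : 1 < p) (hp2 : p ≤ 2) :
    ∃ C : ℝ≥0, ∀ {G : ℂ → ℂ} {c : ℂ} {R : ℝ}, DifferentiableOn ℂ G (closedBall c |R|) →
      (∀ z ∈ closedBall c |R|, 0 < (G z).re) → (G c).im = 0 →
      eLpNorm (fun θ => G (circleMap c R θ)) (ENNReal.ofReal p) arcMeasure
        ≤ C * eLpNorm (fun θ => (G (circleMap c R θ)).re) (ENNReal.ofReal p) arcMeasure := by
  obtain ⟨A, hA, hAG⟩ := exists_circleAverage_norm_rpow_le_of_re_pos hp hp2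
  refine ⟨(A ^ p⁻¹).toNNReal, fun {G c R} hG hG_re hG_im => ?_⟩
  have hp0 : 0 < p := by linarith
  have hG_cont : ContinuousOn G (sphere c |R|) := hG.continuousOn.mono sphere_subset_closedBall
  have h_norm_re : ∀ z ∈ sphere c |R|, ‖(G z).re‖ ^ p = (G z).re ^ p := fun z hz => by
    rw [Real.norm_of_nonneg (hG_re z (sphere_subset_closedBall hz)).le]
  have h_average_nonneg : 0 ≤ circleAverage (fun z => (G z).re ^ p) c R :=
    Real.circleAverage_nonneg_of_nonneg fun z hz =>
      Real.rpow_nonneg (hG_re z (sphere_subset_closedBall hz)).le p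
  have h_eLpNorm_re := eLpNorm_circleMap_eq_circleAverage (f := fun z => (G z).re)
    (continuous_re.comp_continuousOn hG_cont) hp0
  rw [Real.circleAverage_congr_sphere h_norm_re] at h_eLpNorm_re
  rw [eLpNorm_circleMap_eq_circleAverage hG_cont hp0, h_eLpNorm_re, ← ENNReal.ofReal,
    ← ENNReal.ofReal_mul (by positivity), ← Real.mul_rpow hA h_average_nonneg]
  gcongr
  · exact Real.circleAverage_nonneg_of_nonneg fun z _ => by positivity
  · exact hAG hG hG_re hG_im

end CircleNorms

section CircleAngle

/-- The angle in `(0, 2π]` of a point of the unit circle. Composition with it turns a function of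
the angular variable into a function on the circle. -/
def circleAngle (ζ : ℂ) : ℝ := toIocMod Real.two_pi_pos 0 ζ.arg

lemma circleAngle_circleMap (t : ℝ) :
    circleAngle (circleMap 0 1 t) = toIocMod Real.two_pi_pos 0 t := by
  rw [circleAngle, circleMap_zero, ofReal_one, one_mul, Complex.arg_exp_mul_I,
    toIocMod_toIocMod]

lemma circleAngle_circleMap_of_mem_Ioc {t : ℝ} (ht : t ∈ Ioc 0 (2 * π)) :
    circleAngle (circleMap 0 1 t) = t := by
  rwa [circleAngle_circleMap, toIocMod_eq_self, zero_add]

lemma apply_circleAngle_circleMap_of_periodic {α : Type*} {φ : ℝ → α}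
    (hφ : Function.Periodic φ (2 * π)) (t : ℝ) : φ (circleAngle (circleMap 0 1 t)) = φ t := by
  rw [circleAngle_circleMap, toIocMod, hφ.sub_zsmul_eq]

end CircleAngle

section ConjPoissonKernel

/-- The conjugate Poisson kernel of the circle of radius `r` as a function of two angles. It takes
values in `ℂ` so that it is an integral kernel acting on complex functions. -/
def conjPoissonKernel (r θ t : ℝ) : ℂ :=
  (herglotzRieszKernel 0 (circleMap 0 r θ) (circleMap 0 1 t)).im

variable {r : ℝ}

lemma measurable_conjPoissonKernel (hr : |r| < 1) :
    Measurable (Function.uncurry (conjPoissonKernel r)) :=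
  (continuous_ofReal.comp (continuous_im.comp
    (continuous_herglotzRieszKernel_circleMap hr))).measurable

lemma norm_conjPoissonKernel_le (hr : |r| < 1) (θ t : ℝ) :
    ‖conjPoissonKernel r θ t‖ ≤ 2 / (1 - |r|) := by
  have h_norm : ‖circleMap 0 r θ‖ = |r| := by simp
  rw [conjPoissonKernel, norm_real, ← h_norm]
  exact (Complex.abs_im_le_norm _).trans
    (norm_herglotzRieszKernel_le (h_norm ▸ hr) (by simp))

lemma conjPoissonKernel_swap (r θ t : ℝ) :
    conjPoissonKernel r t θ = -conjPoissonKernel r θ t := by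
  rw [conjPoissonKernel, conjPoissonKernel, ← conj_herglotzRieszKernel_circleMap, conj_im,
    ofReal_neg]

lemma conjPoissonInt_circleMap (f : ℂ → ℂ) (r θ : ℝ) :
    conjPoissonInt f (circleMap 0 r θ)
      = ∫ t, conjPoissonKernel r θ t * f (circleMap 0 1 t) ∂arcMeasure := by
  simp only [conjPoissonInt, circleAverage_eq_integral_arcMeasure, real_smul, conjPoissonKernel]

end ConjPoissonKernel

section RealDensity

variable {u : ℂ → ℝ} {z : ℂ} {p r : ℝ}

lemma re_herglotzInt_ofReal (hu : CircleIntegrable u 0 1) (hz : ‖z‖ < 1) :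
    (herglotzInt (fun ζ => u ζ) z).re
      = circleAverage (fun ζ => (herglotzRieszKernel 0 z ζ).re * u ζ) 0 1 :=
  re_circleAverage_herglotzRieszKernel_smul hu (mem_ball_zero_iff.2 hz)

lemma conjPoissonInt_ofReal (hu : CircleIntegrable u 0 1) (hz : ‖z‖ < 1) :
    conjPoissonInt (fun ζ => u ζ) z = ((herglotzInt (fun ζ => u ζ) z).im : ℂ) := by
  have hu' : CircleIntegrable (fun ζ => (u ζ : ℂ)) 0 1 := ⟨hu.1.ofReal, hu.2.ofReal⟩
  have h_conj : conjPoissonInt (fun ζ => u ζ) z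
      = -I / 2 * herglotzInt (fun ζ => u ζ) z + conj (-I / 2 * herglotzInt (fun ζ => u ζ) z) := by
    simpa only [conj_ofReal] using conjPoissonInt_eq_herglotzInt_add_conj hu' hz
  rw [h_conj, add_conj, two_mul_re_neg_I_div_two_mul]

lemma conjPoissonInt_zero (f : ℂ → ℂ) : conjPoissonInt f 0 = 0 := by
  have h_kernel (ζ : ℂ) : (herglotzRieszKernel 0 0 ζ).im = 0 := by
    rcases eq_or_ne ζ 0 with rfl | hζ <;> simp [herglotzRieszKernel_def, *]
  simp only [conjPoissonInt, h_kernel, zero_smul]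
  exact Real.circleAverage_const 0 0 1

lemma re_herglotzInt_ofReal_pos (hu : CircleIntegrable u 0 1) (hu_nonneg : 0 ≤ u)
    (hu_pos : 0 < circleAverage u 0 1) (hz : ‖z‖ < 1) :
    0 < (herglotzInt (fun ζ => u ζ) z).re := by
  set m := (1 - ‖z‖) / (1 + ‖z‖)
  have hm : 0 < m := div_pos (by linarith) (by positivity)
  have h_kernel : ∀ ζ ∈ sphere (0 : ℂ) |1|, m * u ζ ≤ (herglotzRieszKernel 0 z ζ).re * u ζ :=
    fun ζ hζ => by
      gcongr
      · exact hu_nonneg ζ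
      · simpa only [m, herglotzRieszKernel_def, sub_zero] using
          le_re_herglotzRieszKernel (by rwa [abs_one] at hζ) (mem_ball_zero_iff.2 hz)
  rw [re_herglotzInt_ofReal hu hz]
  calc 0 < m * circleAverage u 0 1 := mul_pos hm hu_pos
    _ = circleAverage (fun ζ => m * u ζ) 0 1 := by
        simp only [← smul_eq_mul, Real.circleAverage_fun_smul]
    _ ≤ circleAverage (fun ζ => (herglotzRieszKernel 0 z ζ).re * u ζ) 0 1 :=
        Real.circleAverage_mono hu.const_fun_smul (hu.continuousOn_smul
          (continuous_re.comp_continuousOn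
            (continuousOn_herglotzRieszKernel_sphere (mem_ball_zero_iff.2 hz)))) h_kernel

lemma lintegral_enorm_re_herglotzRieszKernel (hz : ‖z‖ < 1) :
    ∫⁻ t, ‖(herglotzRieszKernel 0 z (circleMap 0 1 t)).re‖ₑ ∂arcMeasure = 1 := by
  have h_int : Integrable (fun t => (herglotzRieszKernel 0 z (circleMap 0 1 t)).re) arcMeasure :=
    integrable_arcMeasure_iff.2 <| (continuous_re.comp_continuousOn
      (continuousOn_herglotzRieszKernel_sphere (mem_ball_zero_iff.2 hz))).circleIntegrable'
  have h_nonneg (t : ℝ) : 0 ≤ (herglotzRieszKernel 0 z (circleMap 0 1 t)).re :=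
    (re_herglotzRieszKernel_pos hz (by simp)).le
  simp only [Real.enorm_of_nonneg (h_nonneg _)]
  rw [← ofReal_integral_eq_lintegral_ofReal h_int (.of_forall h_nonneg),
    ← circleAverage_eq_integral_arcMeasure (fun ζ => (herglotzRieszKernel 0 z ζ).re),
    circleAverage_re_herglotzRieszKernel hz, ENNReal.ofReal_one]

lemma eLpNorm_re_herglotzInt_ofReal_le (hp : 1 < p) (hr : |r| < 1)
    (hu : CircleIntegrable u 0 1) :
    eLpNorm (fun θ => (herglotzInt (fun ζ => u ζ) (circleMap 0 r θ)).re) (ENNReal.ofReal p)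
        arcMeasure
      ≤ eLpNorm (fun t => u (circleMap 0 1 t)) (ENNReal.ofReal p) arcMeasure := by
  have h_norm (θ : ℝ) : ‖circleMap 0 r θ‖ < 1 := by simpa using hr
  simp only [re_herglotzInt_ofReal hu (h_norm _), circleAverage_eq_integral_arcMeasure]
  refine eLpNorm_integral_mul_le_of_lintegral_enorm_le_one
    (k := fun θ t => (herglotzRieszKernel 0 (circleMap 0 r θ) (circleMap 0 1 t)).re) hp
    (continuous_re.comp (continuous_herglotzRieszKernel_circleMap hr)).measurable
    (fun θ => (lintegral_enorm_re_herglotzRieszKernel (h_norm θ)).le) (fun t => ?_)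
    (integrable_arcMeasure_iff.2 hu).1
  simp only [← conj_herglotzRieszKernel_circleMap r t, conj_re]
  exact (lintegral_enorm_re_herglotzRieszKernel (h_norm t)).le

end RealDensity

section Riesz

variable {p q : ℝ}

lemma exists_eLpNorm_conjPoissonInt_ofReal_le_of_pos (hp : 1 < p) (hp2 : p ≤ 2) :
    ∃ C : ℝ≥0, ∀ {u : ℂ → ℝ} {r : ℝ}, |r| < 1 → CircleIntegrable u 0 1 → 0 ≤ u →
      0 < circleAverage u 0 1 →
      eLpNorm (fun θ => conjPoissonInt (fun ζ => u ζ) (circleMap 0 r θ)) (ENNReal.ofReal p)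
          arcMeasure
        ≤ C * eLpNorm (fun t => u (circleMap 0 1 t)) (ENNReal.ofReal p) arcMeasure := by
  obtain ⟨C, hC⟩ := exists_eLpNorm_circleMap_le_eLpNorm_re hp hp2
  refine ⟨C, fun {u r} hr hu hu_nonneg hu_pos => ?_⟩
  set G := herglotzInt fun ζ => u ζ
  have h_subset : closedBall (0 : ℂ) |r| ⊆ ball 0 1 := closedBall_subset_ball hr
  have hG : DifferentiableOn ℂ G (closedBall 0 |r|) :=
    (differentiableOn_herglotzInt (f := fun ζ => u ζ) ⟨hu.1.ofReal, hu.2.ofReal⟩).mono h_subset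
  have hG_re : ∀ z ∈ closedBall 0 |r|, 0 < (G z).re := fun z hz =>
    re_herglotzInt_ofReal_pos hu hu_nonneg hu_pos (mem_ball_zero_iff.1 (h_subset hz))
  have hG_im : (G 0).im = 0 := by
    rw [← ofReal_eq_zero, ← conjPoissonInt_ofReal hu (by simp), conjPoissonInt_zero]
  calc eLpNorm (fun θ => conjPoissonInt (fun ζ => u ζ) (circleMap 0 r θ)) (ENNReal.ofReal p)
        arcMeasure
      ≤ eLpNorm (fun θ => G (circleMap 0 r θ)) (ENNReal.ofReal p) arcMeasure :=
        eLpNorm_mono fun θ => by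
          rw [conjPoissonInt_ofReal hu (by simpa using hr), norm_real]
          exact Complex.abs_im_le_norm _
    _ ≤ C * eLpNorm (fun θ => (G (circleMap 0 r θ)).re) (ENNReal.ofReal p) arcMeasure :=
        hC hG hG_re hG_im
    _ ≤ C * eLpNorm (fun t => u (circleMap 0 1 t)) (ENNReal.ofReal p) arcMeasure := by
        gcongr
        exact eLpNorm_re_herglotzInt_ofReal_le hp hr hu

lemma exists_eLpNorm_integral_conjPoissonKernel_mul_ofReal_le (hp : 1 < p) (hp2 : p ≤ 2) :
    ∃ C : ℝ≥0, ∀ {r : ℝ} {g : ℝ → ℝ}, |r| < 1 → 0 ≤ g → Integrable g arcMeasure →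
      eLpNorm (fun θ => ∫ t, conjPoissonKernel r θ t * (g t : ℂ) ∂arcMeasure) (ENNReal.ofReal p)
          arcMeasure
        ≤ C * eLpNorm g (ENNReal.ofReal p) arcMeasure := by
  obtain ⟨C, hC⟩ := exists_eLpNorm_conjPoissonInt_ofReal_le_of_pos hp hp2
  refine ⟨C, fun {r g} hr hg_nonneg hg => ?_⟩
  rcases (integral_nonneg hg_nonneg).eq_or_lt' with hg_zero | hg_pos
  · have hg_ae : g =ᵐ[arcMeasure] 0 := (integral_eq_zero_iff_of_nonneg hg_nonneg hg).1 hg_zero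
    have h_int (θ : ℝ) : ∫ t, conjPoissonKernel r θ t * (g t : ℂ) ∂arcMeasure = 0 :=
      integral_eq_zero_of_ae (hg_ae.mono fun t ht => by simp [ht])
    simp [h_int]
  · set u : ℂ → ℝ := fun ζ => g (circleAngle ζ)
    have hu_ae : (fun t => u (circleMap 0 1 t)) =ᵐ[arcMeasure] g :=
      ae_arcMeasure_of_forall_mem_Ioc fun t ht => by
        simp only [u, circleAngle_circleMap_of_mem_Ioc ht]
    have hu : CircleIntegrable u 0 1 := integrable_arcMeasure_iff.1 (hg.congr hu_ae.symm)
    have hu_pos : 0 < circleAverage u 0 1 := by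
      rwa [circleAverage_eq_integral_arcMeasure, integral_congr_ae hu_ae]
    have h_conj (θ : ℝ) : conjPoissonInt (fun ζ => u ζ) (circleMap 0 r θ)
        = ∫ t, conjPoissonKernel r θ t * (g t : ℂ) ∂arcMeasure := by
      rw [conjPoissonInt_circleMap]
      exact integral_congr_ae (hu_ae.mono fun t ht => by simp only [ht])
    simpa only [h_conj, eLpNorm_congr_ae hu_ae] using
      hC hr hu (fun ζ => hg_nonneg _) hu_pos

lemma exists_eLpNorm_integral_conjPoissonKernel_mul_le_of_le_two (hp : 1 < p) (hp2 : p ≤ 2) :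
    ∃ C : ℝ≥0, ∀ {r : ℝ} {φ : ℝ → ℂ}, |r| < 1 → MemLp φ (ENNReal.ofReal p) arcMeasure →
      eLpNorm (fun θ => ∫ t, conjPoissonKernel r θ t * φ t ∂arcMeasure) (ENNReal.ofReal p)
          arcMeasure
        ≤ C * eLpNorm φ (ENNReal.ofReal p) arcMeasure := by
  obtain ⟨C, hC⟩ := exists_eLpNorm_integral_conjPoissonKernel_mul_ofReal_le hp hp2
  have hp1 : 1 ≤ ENNReal.ofReal p := ENNReal.one_le_ofReal.2 hp.le
  refine ⟨4 * C, fun {r φ} hr hφ => ?_⟩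
  exact_mod_cast eLpNorm_integral_mul_le_of_forall_nonneg (measurable_conjPoissonKernel hr)
    (norm_conjPoissonKernel_le hr) hp1
    (fun g hg_nonneg hg => hC hr hg_nonneg (hg.integrable hp1)) hφ

theorem exists_eLpNorm_integral_conjPoissonKernel_mul_le (hp : 1 < p) :
    ∃ C : ℝ≥0, ∀ {r : ℝ} {φ : ℝ → ℂ}, |r| < 1 → MemLp φ (ENNReal.ofReal p) arcMeasure →
      eLpNorm (fun θ => ∫ t, conjPoissonKernel r θ t * φ t ∂arcMeasure) (ENNReal.ofReal p)
          arcMeasure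
        ≤ C * eLpNorm φ (ENNReal.ofReal p) arcMeasure := by
  rcases le_total p 2 with hp2 | hp2
  · exact exists_eLpNorm_integral_conjPoissonKernel_mul_le_of_le_two hp hp2
  have hpq := Real.HolderConjugate.conjExponent hp
  set q := p.conjExponent
  have hq2 : q ≤ 2 := by
    rw [hpq.conjugate_eq, div_le_iff₀ hpq.sub_one_pos]
    linarith
  obtain ⟨C, hC⟩ := exists_eLpNorm_integral_conjPoissonKernel_mul_le_of_le_two hpq.symm.lt hq2
  refine ⟨C, fun {r φ} hr hφ => eLpNorm_integral_mul_le_of_dual hpq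
    (measurable_conjPoissonKernel hr) (norm_conjPoissonKernel_le hr) (fun g hg => ?_) hφ⟩
  have h_swap : (fun t => ∫ θ, conjPoissonKernel r θ t * g θ ∂arcMeasure)
      = -fun t => ∫ θ, conjPoissonKernel r t θ * g θ ∂arcMeasure := by
    ext t
    simp_rw [fun θ => conjPoissonKernel_swap r t θ, neg_mul, integral_neg]
    rfl
  rw [h_swap, eLpNorm_neg]
  exact hC hr hg

end Riesz

section MeanRadius

variable {p r : ℝ} {g : ℂ → ℂ}

lemma ofReal_Mp_eq_eLpNorm (hp : 0 < p) (hg : ContinuousOn g (sphere 0 |r|)) :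
    ENNReal.ofReal (Mp p g r)
      = eLpNorm (fun θ => g (circleMap 0 r θ)) (ENNReal.ofReal p) arcMeasure := by
  rw [eLpNorm_circleMap_eq_circleAverage hg hp, Mp, Real.circleAverage_def]
  simp only [circleMap_zero, smul_eq_mul, one_div]

end MeanRadius

section HardySpace

variable {F f : ℂ → ℂ} {p : ℝ}

lemma IsACDeriv.harmonicOnNhd_rFr_poissonInt (hF : IsACDeriv F fun t => f (circleMap 0 1 t)) :
    InnerProductSpace.HarmonicOnNhd (rFr (poissonInt F)) (ball 0 1) := fun z hz =>
  (InnerProductSpace.harmonicAt_congr_nhds <| eventually_of_mem (isOpen_ball.mem_nhds hz)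
    fun _ hw => hF.rFr_poissonInt_eq_conjPoissonInt (mem_ball_zero_iff.1 hw)).2
    (harmonicOnNhd_conjPoissonInt (hF.1 0 (2 * π)) z hz)

theorem exists_Mp_conjPoissonInt_le (hp : 1 < p)
    (hf : MemLp (fun t => f (circleMap 0 1 t)) (ENNReal.ofReal p) arcMeasure) :
    ∃ M : ℝ, ∀ r : ℝ, |r| < 1 → Mp p (conjPoissonInt f) r ≤ M := by
  obtain ⟨C, hC⟩ := exists_eLpNorm_integral_conjPoissonKernel_mul_le hp
  have hf_int : CircleIntegrable f 0 1 :=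
    integrable_arcMeasure_iff.1 (hf.integrable (ENNReal.one_le_ofReal.2 hp.le))
  refine ⟨_, fun r hr => (ENNReal.ofReal_le_iff_le_toReal
    (ENNReal.mul_ne_top ENNReal.coe_ne_top hf.eLpNorm_ne_top)).1 ((hC hr hf).trans' ?_)⟩
  simp only [← conjPoissonInt_circleMap]
  refine (ofReal_Mp_eq_eLpNorm (by linarith) fun z hz => ?_).le
  have hz' : z ∈ ball (0 : ℂ) 1 :=
    sphere_subset_closedBall.trans (closedBall_subset_ball hr) hz
  exact (harmonicOnNhd_conjPoissonInt hf_int z hz').1.continuousAt.continuousWithinAt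

end HardySpace

/-- For `p ∈ (1,∞)`, `F : 𝕋 → ℂ` absolutely continuous with
`Ḟ ∈ L^p(𝕋)` and `f = P[F]`, the function `z ↦ r f_r(z) = z f_z(z) + z̄ f_z̄(z)`
belongs to the harmonic Hardy space `h^p(𝔻)`. -/
theorem stmt3 (p : ℝ) (hp : 1 < p) (F : ℂ → ℂ) (Fd : ℝ → ℂ)
    (hF : IsACDeriv F Fd) (hLp : MemLpT (ENNReal.ofReal p) Fd) :
    Memhp p (rFr (poissonInt F)) := by
  obtain ⟨f, rfl⟩ : ∃ f : ℂ → ℂ, (fun t => f (circleMap 0 1 t)) = Fd :=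
    ⟨fun ζ => Fd (circleAngle ζ), funext (apply_circleAngle_circleMap_of_periodic hF.2.1)⟩
  obtain ⟨M, hM⟩ := exists_Mp_conjPoissonInt_le hp (memLp_arcMeasure_iff.2 hLp)
  refine ⟨harmonicOnD_of_harmonicOnNhd hF.harmonicOnNhd_rFr_poissonInt, M, fun r hr => ?_⟩
  have hr1 : |r| < 1 := by rw [abs_of_pos hr.1]; exact hr.2
  have h_norm (θ : ℝ) : ‖(r : ℂ) * cexp (θ * I)‖ < 1 := by simpa using hr1
  have h_Mp : Mp p (rFr (poissonInt F)) r = Mp p (conjPoissonInt f) r := by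
    simp only [Mp, hF.rFr_poissonInt_eq_conjPoissonInt (h_norm _)]
  exact h_Mp.trans_le (hM r hr1)

end
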